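/- arXiv:1311.1538 — 2 statements merged into one kernel-verified Lean document; each statement's English description precedes it below -/
import Mathlib

section
/- Let f₁, …, f_r, f ∈ ℝ⟨X⟩. The following four conditions are equivalent: (i) for every n ∈ ℕ and every A ∈ Mₙ(ℂ)^g, tr(f₁(A)) = … = tr(f_r(A)) = 0 implies tr(f(A)) = 0; (ii) there exist λ₁, …, λ_r ∈ ℂ such that λ₁f₁ + ⋯ + λ_rf_r is cyclically equivalent to 1 in ℂ⟨X⟩, or λ₁f₁ + ⋯ + λ_rf_r is cyclically equivalent to f in ℂ⟨X⟩; (iii) there exist λ₁, …, λ_r ∈ ℝ such that λ₁f₁ + ⋯ + λ_rf_r is cyclically equivalent to 1 in ℝ⟨X⟩, or λ₁f₁ + ⋯ + λ_rf_r is cyclically equivalent to f in ℝ⟨X⟩; (iv) for every n ∈ ℕ and every A ∈ Mₙ(ℝ)^g, tr(f₁(A)) = … = tr(f_r(A)) = 0 implies tr(f(A)) = 0. -/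
/-- Two free noncommutative polynomials are cyclically equivalent if their difference
lies in the `F`-linear span of commutators `p * q - q * p`. -/
def CycEq (F : Type*) [Field F] {g : ℕ} (f h : FreeAlgebra F (Fin g)) : Prop :=
  f - h ∈ Submodule.span F
    {x : FreeAlgebra F (Fin g) | ∃ p q : FreeAlgebra F (Fin g), x = p * q - q * p}

/-- The natural inclusion `ℝ⟨X⟩ → ℂ⟨X⟩`. -/
noncomputable def toComplex (g : ℕ) : FreeAlgebra ℝ (Fin g) →ₐ[ℝ] FreeAlgebra ℂ (Fin g) :=
  FreeAlgebra.lift ℝ (FreeAlgebra.ι ℂ)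

/-!
If neither `1` nor `f₀` lies in the span `U` of the `fᵢ` and the commutators, then, the field
being infinite, some linear functional `τ` vanishes on `U` but neither at `1` nor at `f₀`;
normalize it by `τ 1 = 1`. In characteristic zero such a tracial functional is, on finitely many
polynomials, a normalized matrix trace. To see this one fixes the traces of words degree by
degree: the matrix tuple that walks around a cyclic word of length `d` has trace zero on every
word of length not divisible by `d`, and on words of length `d` it detects exactly the rotations
of its own word, so direct sums of such tuples correct degree `d` without disturbing the lower
degrees. The size `N` of the matrices has to match the trace of the identity; it depends only on
the degree bound, so it can be chosen first and the construction applied to `N • τ`. The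
equivalence of evaluation and span conditions holds over both fields of an extension `K / F`, so
it remains to restrict evaluations from `K` to `F` and to extend the scalars in a cyclic
equivalence.
-/

namespace Spurnullstellensatz

section Traces

lemma trace_fromBlocks {P Q R : Type*} [Fintype P] [Fintype Q] [AddCommMonoid R]
    (A : Matrix P P R) (B : Matrix P Q R) (C : Matrix Q P R) (D : Matrix Q Q R) :
    (Matrix.fromBlocks A B C D).trace = A.trace + D.trace := by
  simp [Matrix.trace, Fintype.sum_sum_type]

variable {X P R : Type*} [DecidableEq P] [CommSemiring R]

/-- The matrix of the map `s` with weights `a`: row `p` has the single entry `a p`, in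
column `s p`. -/
def weightedMapMatrix (s : P → P) (a : P → R) : Matrix P P R :=
  Matrix.of fun p q => if q = s p then a p else 0

lemma weightedMapMatrix_id_one : weightedMapMatrix id (1 : P → R) = 1 := by
  ext p q
  simp [weightedMapMatrix, Matrix.one_apply, eq_comm]

variable [Fintype P]

lemma weightedMapMatrix_mul (s t : P → P) (a b : P → R) :
    weightedMapMatrix s a * weightedMapMatrix t b =
      weightedMapMatrix (t ∘ s) fun p => a p * b (s p) := by
  ext p q
  simp only [weightedMapMatrix, Matrix.mul_apply, Matrix.of_apply, ite_mul, zero_mul,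
    Finset.sum_ite_eq', Finset.mem_univ, if_true]
  simp only [Function.comp_apply, mul_ite, mul_zero]

lemma trace_weightedMapMatrix (s : P → P) (a : P → R) :
    (weightedMapMatrix s a).trace = ∑ p, if p = s p then a p else 0 := rfl

lemma prod_ofFn_weightedMapMatrix (s : P → P) (a : X → P → R) {n : ℕ} (v : Fin n → X) :
    ((List.ofFn v).map fun x => weightedMapMatrix s (a x)).prod =
      weightedMapMatrix s^[n] fun p => ∏ i : Fin n, a (v i) (s^[i] p) := by
  induction n with
  | zero => simpa [Pi.one_def] using weightedMapMatrix_id_one.symm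
  | succ n ih =>
    rw [List.ofFn_succ, List.map_cons, List.prod_cons, ih, weightedMapMatrix_mul]
    simp only [Fin.prod_univ_succ, Function.iterate_succ, Fin.val_zero, Fin.val_succ,
      Function.iterate_zero, id_eq, Function.comp_apply]

lemma prod_map_fromBlocks {Q : Type*} [Fintype Q] [DecidableEq Q] (A : X → Matrix P P R)
    (B : X → Matrix Q Q R) (u : List X) :
    (u.map fun x => Matrix.fromBlocks (A x) 0 0 (B x)).prod =
      Matrix.fromBlocks (u.map A).prod 0 0 (u.map B).prod := by
  induction u with
  | nil => simp
  | cons x u ih => simp [ih, Matrix.fromBlocks_multiply]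

lemma prod_map_blockDiagonal {ι : Type*} [DecidableEq ι] [Fintype ι] (A : ι → X → Matrix P P R)
    (u : List X) :
    (u.map fun x => Matrix.blockDiagonal fun i => A i x).prod =
      Matrix.blockDiagonal fun i => (u.map (A i)).prod := by
  induction u with
  | nil => exact Matrix.blockDiagonal_one.symm
  | cons x u ih => simp only [List.map_cons, List.prod_cons, ih, ← Matrix.blockDiagonal_mul]

lemma trace_prod_map_reindex {Q : Type*} [Fintype Q] [DecidableEq Q] (e : P ≃ Q)
    (A : X → Matrix P P R) (u : List X) :
    (u.map fun x => Matrix.reindex e e (A x)).prod.trace = (u.map A).prod.trace := by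
  have h_prod : (u.map fun x => Matrix.reindex e e (A x)).prod =
      Matrix.reindex e e (u.map A).prod := by
    simpa only [Matrix.coe_reindexAlgEquiv, List.map_map, Function.comp_def] using
      (map_list_prod (Matrix.reindexAlgEquiv R R e) (u.map A)).symm
  rw [h_prod]
  exact Equiv.sum_comp e.symm fun i => (u.map A).prod i i

end Traces

section CyclicWords

open scoped Fin.CommRing

variable {X R : Type*} [DecidableEq X] [CommSemiring R] {d : ℕ} [NeZero d]

/-- The value at the letter `x` of the matrix tuple on the positions of the cyclic word `w` that
steps from each position to the next while reading `w`, collecting the factor `c` at position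
`0`. -/
def cyclicWordMatrix (w : Fin d → X) (c : R) (x : X) : Matrix (Fin d) (Fin d) R :=
  weightedMapMatrix (· + 1) fun k =>
    if w k = x then (Pi.mulSingle 0 c : Fin d → R) k else 0

lemma trace_prod_cyclicWordMatrix {n : ℕ} (w : Fin d → X) (c : R) (v : Fin n → X) :
    ((List.ofFn v).map (cyclicWordMatrix w c)).prod.trace =
      ∑ k : Fin d, if (n : Fin d) = 0 then
        ∏ i : Fin n,
          if w (k + (i : ℕ)) = v i then (Pi.mulSingle 0 c : Fin d → R) (k + (i : ℕ)) else 0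
      else 0 := by
  unfold cyclicWordMatrix
  simp only [prod_ofFn_weightedMapMatrix, trace_weightedMapMatrix, add_right_iterate, nsmul_one,
    left_eq_add]

lemma trace_prod_cyclicWordMatrix_eq_zero {n : ℕ} (w : Fin d → X) (c : R) (v : Fin n → X)
    (hn : ¬ d ∣ n) : ((List.ofFn v).map (cyclicWordMatrix w c)).prod.trace = 0 := by
  simp only [trace_prod_cyclicWordMatrix, Fin.natCast_eq_zero, hn, if_false,
    Finset.sum_const_zero]

lemma trace_prod_cyclicWordMatrix_self (w : Fin d → X) (c : R) (v : Fin d → X) :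
    ((List.ofFn v).map (cyclicWordMatrix w c)).prod.trace =
      ∑ k : Fin d, if w = (fun i => v (i + k)) then c else 0 := by
  rw [trace_prod_cyclicWordMatrix, ← Equiv.sum_comp (Equiv.neg (Fin d))]
  refine Finset.sum_congr rfl fun k _ => ?_
  have h_weight : ∏ i : Fin d, (Pi.mulSingle 0 c : Fin d → R) (-k + i) = c :=
    (Equiv.prod_comp (Equiv.addLeft (-k)) _).trans (by simp)
  have h_reads : (∀ i : Fin d, w (-k + i) = v i) ↔ w = fun i => v (i + k) := by
    rw [(Equiv.addRight k).symm.forall_congr_left, funext_iff]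
    simp
  simp [Fintype.prod_ite_zero, h_weight, h_reads]

lemma sum_trace_prod_cyclicWordMatrix [Fintype X] (c : (Fin d → X) → R) (v : Fin d → X) :
    ∑ w, ((List.ofFn v).map (cyclicWordMatrix w (c w))).prod.trace =
      ∑ k : Fin d, c fun i => v (i + k) := by
  simp only [trace_prod_cyclicWordMatrix_self]
  rw [Finset.sum_comm]
  simp only [Finset.sum_ite_eq', Finset.mem_univ, if_true]

end CyclicWords

section Realization

variable {X : Type*}

lemma apply_ofFn_rotate {M : Type*} {d : ℕ} [NeZero d] {L : List X → M}
    (hL : ∀ u v, L (u ++ v) = L (v ++ u)) (v : Fin d → X) (k : Fin d) :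
    L (List.ofFn fun i => v (i + k)) = L (List.ofFn v) := by
  have h_rotate : (List.ofFn fun i => v (i + k)) = (List.ofFn v).rotate k := by
    refine List.ext_getElem (by simp) fun i _ _ => ?_
    simp only [List.getElem_rotate, List.getElem_ofFn, List.length_ofFn]
    congr 1
  rw [h_rotate, List.rotate_eq_drop_append_take (by simp), hL,
    List.take_append_drop]

variable {F : Type*} [Field F] [CharZero F] [Finite X]

lemma exists_trace_prod_eq_of_length_eq (d : ℕ) [NeZero d] :
    ∃ N : ℕ, ∀ L : List X → F, (∀ u v, L (u ++ v) = L (v ++ u)) →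
      ∃ B : X → Matrix (Fin N) (Fin N) F,
        (∀ u : List X, u.length = d → (u.map B).prod.trace = L u) ∧
        ∀ u : List X, ¬ d ∣ u.length → (u.map B).prod.trace = 0 := by
  classical
  cases nonempty_fintype X
  let P := Fin d × (Fin d → X)
  refine ⟨Fintype.card P, fun L hL => ?_⟩
  -- A cyclic word of length `d` is read from each of its `d` starting points.
  let c (w : Fin d → X) : F := L (List.ofFn w) / d
  let B (x : X) : Matrix P P F := Matrix.blockDiagonal fun w => cyclicWordMatrix w (c w) x
  have h_trace (u : List X) :
      (u.map fun x => Matrix.reindex (Fintype.equivFin P) (Fintype.equivFin P) (B x)).prod.trace =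
        ∑ w, (u.map (cyclicWordMatrix w (c w))).prod.trace := by
    rw [trace_prod_map_reindex, prod_map_blockDiagonal, Matrix.trace_blockDiagonal]
  refine ⟨_, fun u hu => (h_trace u).trans ?_, fun u hu => (h_trace u).trans ?_⟩
  · obtain ⟨v, rfl⟩ : ∃ v : Fin d → X, List.ofFn v = u := by
      subst hu
      exact ⟨u.get, List.ofFn_get u⟩
    simp only [sum_trace_prod_cyclicWordMatrix, c, apply_ofFn_rotate hL]
    rw [Finset.sum_const, Finset.card_univ, Fintype.card_fin, nsmul_eq_mul,
      mul_div_cancel₀ _ (NeZero.ne _)]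
  · refine Finset.sum_eq_zero fun w _ => ?_
    rw [← List.ofFn_get u]
    exact trace_prod_cyclicWordMatrix_eq_zero w (c w) u.get hu

lemma exists_trace_prod_eq_of_length_le (D : ℕ) :
    ∃ N : ℕ, N ≠ 0 ∧ ∀ L : List X → F, (∀ u v, L (u ++ v) = L (v ++ u)) →
      ∃ A : X → Matrix (Fin N) (Fin N) F,
        ∀ u : List X, u ≠ [] → u.length ≤ D → (u.map A).prod.trace = L u := by
  induction D with
  | zero => exact ⟨1, one_ne_zero, fun L _ =>
      ⟨0, fun u hu hu0 => absurd (List.length_eq_zero_iff.1 (Nat.le_zero.1 hu0)) hu⟩⟩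
  | succ D ih =>
    obtain ⟨N, hN, hA⟩ := ih
    obtain ⟨N', hB⟩ := exists_trace_prod_eq_of_length_eq (X := X) (F := F) (D + 1)
    refine ⟨N + N', by omega, fun L hL => ?_⟩
    obtain ⟨A, hA⟩ := hA L hL
    obtain ⟨B, hB, hB0⟩ := hB (fun u => L u - (u.map A).prod.trace) fun u v => by
      rw [hL, List.map_append, List.prod_append, Matrix.trace_mul_comm, List.map_append,
        List.prod_append]
    refine ⟨fun x => Matrix.reindex finSumFinEquiv finSumFinEquiv
      (Matrix.fromBlocks (A x) 0 0 (B x)), fun u hu hu_le => ?_⟩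
    rw [trace_prod_map_reindex, prod_map_fromBlocks, trace_fromBlocks]
    rcases hu_le.eq_or_lt with hu_eq | hu_lt
    · rw [hB u hu_eq, add_sub_cancel]
    · have h_not_dvd : ¬ D + 1 ∣ u.length :=
        Nat.not_dvd_of_pos_of_lt (List.length_pos_iff.2 hu) hu_lt
      rw [hA u hu (Nat.lt_succ_iff.1 hu_lt), hB0 u h_not_dvd, add_zero]

end Realization

section Tracial

variable {F A M : Type*} [CommRing F] [Ring A] [Algebra F A] [AddCommGroup M] [Module F M]

variable (F A) in
/-- The linear span of the commutators of an algebra; `CycEq` is congruence modulo this span. -/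
def commutatorSpan : Submodule F A :=
  Submodule.span F {x | ∃ p q : A, x = p * q - q * p}

lemma commutatorSpan_le_ker_iff {τ : A →ₗ[F] M} :
    commutatorSpan F A ≤ LinearMap.ker τ ↔ ∀ p q, τ (p * q) = τ (q * p) := by
  rw [commutatorSpan, Submodule.span_le]
  refine ⟨fun h p q => sub_eq_zero.1 ?_, ?_⟩
  · rw [← map_sub]
    exact h ⟨p, q, rfl⟩
  · rintro h _ ⟨p, q, rfl⟩
    rw [SetLike.mem_coe, LinearMap.mem_ker, map_sub, h, sub_self]

end Tracial

section TraceEvaluation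

variable {F X n : Type*} [CommRing F] [Fintype n] [DecidableEq n]

/-- The linear functional `p ↦ tr p(A)` on the free algebra. -/
def traceEval (A : X → Matrix n n F) : FreeAlgebra F X →ₗ[F] F :=
  Matrix.traceLinearMap n F F ∘ₗ (FreeAlgebra.lift F A).toLinearMap

lemma traceEval_apply (A : X → Matrix n n F) (p : FreeAlgebra F X) :
    traceEval A p = (FreeAlgebra.lift F A p).trace := rfl

lemma traceEval_one (A : X → Matrix n n F) : traceEval A 1 = Fintype.card n := by
  rw [traceEval_apply, map_one, Matrix.trace_one]

lemma commutatorSpan_le_ker_traceEval (A : X → Matrix n n F) :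
    commutatorSpan F (FreeAlgebra F X) ≤ LinearMap.ker (traceEval A) :=
  commutatorSpan_le_ker_iff.2 fun p q => by
    rw [traceEval_apply, traceEval_apply, map_mul, map_mul, Matrix.trace_mul_comm]

lemma basisFreeMonoid_apply {R : Type*} [CommSemiring R] (u : FreeMonoid X) :
    FreeAlgebra.basisFreeMonoid R X u = FreeMonoid.lift (FreeAlgebra.ι R) u := by
  simp [FreeAlgebra.basisFreeMonoid, FreeAlgebra.equivMonoidAlgebraFreeMonoid]

lemma traceEval_basisFreeMonoid (A : X → Matrix n n F) (u : FreeMonoid X) :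
    traceEval A (FreeAlgebra.basisFreeMonoid F X u) = (u.toList.map A).prod.trace := by
  rw [traceEval_apply, basisFreeMonoid_apply, FreeMonoid.lift_apply, map_list_prod, List.map_map]
  congr 3
  funext x
  exact FreeAlgebra.lift_ι_apply A x

end TraceEvaluation

section Approximation

variable {F X : Type*} [Field F] [CharZero F] [Finite X]

theorem exists_traceEval_eq_natCast_mul {S : Set (FreeAlgebra F X)} (hS : S.Finite)
    {τ : FreeAlgebra F X →ₗ[F] F} (hτ : commutatorSpan F (FreeAlgebra F X) ≤ LinearMap.ker τ)
    (hτ_one : τ 1 = 1) :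
    ∃ N : ℕ, N ≠ 0 ∧ ∃ A : X → Matrix (Fin N) (Fin N) F, ∀ p ∈ S, traceEval A p = N * τ p := by
  let b := FreeAlgebra.basisFreeMonoid F X
  have hb_mul (u v : FreeMonoid X) : b (u * v) = b u * b v := by
    simp only [b, basisFreeMonoid_apply, map_mul]
  have hb_one : b 1 = 1 := by simp only [b, basisFreeMonoid_apply, map_one]
  obtain ⟨D, hD⟩ : ∃ D : ℕ, S ⊆ Submodule.span F (b '' {u | u.length ≤ D}) := by
    obtain ⟨D, hD⟩ := (hS.biUnion fun p _ => (b.repr p).support.finite_toSet.image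
      FreeMonoid.length).bddAbove
    exact ⟨D, fun p hp => b.mem_span_image.2 fun u hu =>
      hD (Set.mem_biUnion hp (Set.mem_image_of_mem _ hu))⟩
  obtain ⟨N, hN, h_realize⟩ := exists_trace_prod_eq_of_length_le (X := X) (F := F) D
  obtain ⟨A, hA⟩ := h_realize (fun u => N * τ (b (FreeMonoid.ofList u))) fun u v => by
    rw [FreeMonoid.ofList_append, FreeMonoid.ofList_append, hb_mul, hb_mul,
      commutatorSpan_le_ker_iff.1 hτ]
  refine ⟨N, hN, A, fun p hp => ?_⟩
  have h_eqOn : Set.EqOn (traceEval A) ((N : F) • τ : FreeAlgebra F X →ₗ[F] F)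
      (b '' {u | u.length ≤ D}) := by
    rintro _ ⟨u, hu, rfl⟩
    rw [LinearMap.smul_apply, smul_eq_mul]
    rcases eq_or_ne u 1 with rfl | hu_ne
    · rw [hb_one, traceEval_one, hτ_one, Fintype.card_fin, mul_one]
    · exact (traceEval_basisFreeMonoid A u).trans (hA u.toList hu_ne hu)
  exact LinearMap.eqOn_span h_eqOn (hD hp)

end Approximation

section Nullstellensatz

lemma exists_le_ker_forall_ne_zero {F V ι : Type*} [Field F] [Infinite F] [AddCommGroup V]
    [Module F V] [Finite ι] {U : Submodule F V} {v : ι → V} (hv : ∀ i, v i ∉ U) :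
    ∃ τ : V →ₗ[F] F, U ≤ LinearMap.ker τ ∧ ∀ i, τ (v i) ≠ 0 := by
  have hv_mkQ (i : ι) : U.mkQ (v i) ≠ 0 := by simpa using hv i
  obtain ⟨τ, hτ⟩ := Module.exists_dual_forall_apply_ne_zero (K := F) _ hv_mkQ
  exact ⟨τ ∘ₗ U.mkQ, U.ker_mkQ.ge.trans (LinearMap.ker_le_ker_comp _ _), hτ⟩

theorem one_mem_or_mem_iff_forall_traceEval {F X ι : Type*} [Field F] [CharZero F] [Finite X]
    [Finite ι] (f : ι → FreeAlgebra F X) (f₀ : FreeAlgebra F X) :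
    (1 ∈ Submodule.span F (Set.range f) ⊔ commutatorSpan F (FreeAlgebra F X) ∨
        f₀ ∈ Submodule.span F (Set.range f) ⊔ commutatorSpan F (FreeAlgebra F X)) ↔
      ∀ (n : ℕ) (A : X → Matrix (Fin n) (Fin n) F),
        (∀ i, traceEval A (f i) = 0) → traceEval A f₀ = 0 := by
  let U := Submodule.span F (Set.range f) ⊔ commutatorSpan F (FreeAlgebra F X)
  constructor
  · intro h n A hA
    have hU : U ≤ LinearMap.ker (traceEval A) :=
      sup_le (Submodule.span_le.2 (Set.range_subset_iff.2 hA)) (commutatorSpan_le_ker_traceEval A)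
    rcases h with h_one | h_mem
    · obtain rfl : n = 0 := by simpa [traceEval_one] using hU h_one
      exact Matrix.trace_fin_zero (FreeAlgebra.lift F A f₀)
    · exact hU h_mem
  · contrapose!
    rintro ⟨h_one, h_notMem⟩
    obtain ⟨τ, hτU, hτ⟩ := exists_le_ker_forall_ne_zero (U := U) (v := ![1, f₀])
      (Fin.forall_fin_two.2 ⟨h_one, h_notMem⟩)
    obtain ⟨hτ_one, hτ_f₀⟩ : τ 1 ≠ 0 ∧ τ f₀ ≠ 0 := Fin.forall_fin_two.1 hτ
    have hσU : U ≤ LinearMap.ker ((τ 1)⁻¹ • τ) := fun p hp => by simp [show τ p = 0 from hτU hp]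
    obtain ⟨N, hN, A, hA⟩ := exists_traceEval_eq_natCast_mul
      (S := insert f₀ (Set.range f)) ((Set.finite_range f).insert f₀)
      (le_sup_right.trans hσU) (inv_mul_cancel₀ hτ_one)
    refine ⟨N, A, fun i => ?_, ?_⟩
    · have hfi : ((τ 1)⁻¹ • τ) (f i) = 0 :=
        hσU (Submodule.mem_sup_left (Submodule.subset_span ⟨i, rfl⟩))
      rw [hA (f i) (Or.inr ⟨i, rfl⟩), hfi, mul_zero]
    · rw [hA f₀ (Or.inl rfl)]
      exact mul_ne_zero (Nat.cast_ne_zero.2 hN) (mul_ne_zero (inv_ne_zero hτ_one) hτ_f₀)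

variable {F : Type*} [Field F] {g : ℕ} {ι : Type*} [Fintype ι]

lemma exists_cycEq_sum_smul_iff (f : ι → FreeAlgebra F (Fin g)) (h : FreeAlgebra F (Fin g)) :
    (∃ c : ι → F, CycEq F (∑ i, c i • f i) h) ↔
      h ∈ Submodule.span F (Set.range f) ⊔ commutatorSpan F (FreeAlgebra F (Fin g)) := by
  rw [Submodule.mem_sup]
  constructor
  · rintro ⟨c, hc⟩
    exact ⟨_, (Submodule.mem_span_range_iff_exists_fun F).2 ⟨c, rfl⟩, _, neg_mem hc, by abel⟩
  · rintro ⟨_, hs, t, ht, rfl⟩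
    obtain ⟨c, rfl⟩ := (Submodule.mem_span_range_iff_exists_fun F).1 hs
    exact ⟨c, by rw [CycEq, sub_add_cancel_left]; exact neg_mem ht⟩

theorem exists_cycEq_iff_forall_trace [CharZero F] (f : ι → FreeAlgebra F (Fin g))
    (f₀ : FreeAlgebra F (Fin g)) :
    (∃ c : ι → F, CycEq F (∑ i, c i • f i) 1 ∨ CycEq F (∑ i, c i • f i) f₀) ↔
      ∀ (n : ℕ) (A : Fin g → Matrix (Fin n) (Fin n) F),
        (∀ i, (FreeAlgebra.lift F A (f i)).trace = 0) → (FreeAlgebra.lift F A f₀).trace = 0 := by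
  rw [exists_or, exists_cycEq_sum_smul_iff, exists_cycEq_sum_smul_iff]
  exact one_mem_or_mem_iff_forall_traceEval f f₀

end Nullstellensatz

section ScalarExtension

variable (F K : Type*) [CommSemiring F] [CommSemiring K] [Algebra F K]

/-- The inclusion `F⟨X⟩ → K⟨X⟩` for an `F`-algebra `K`; `toComplex` is the case `ℂ / ℝ`. -/
noncomputable def extendScalars (X : Type*) : FreeAlgebra F X →ₐ[F] FreeAlgebra K X :=
  FreeAlgebra.lift F (FreeAlgebra.ι K)

variable {F K}

lemma lift_extendScalars {X B : Type*} [Semiring B] [Algebra F B] [Algebra K B]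
    [IsScalarTower F K B] (A : X → B) (p : FreeAlgebra F X) :
    FreeAlgebra.lift K A (extendScalars F K X p) = FreeAlgebra.lift F A p := by
  have h_comp : ((FreeAlgebra.lift K A).restrictScalars F).comp (extendScalars F K X) =
      FreeAlgebra.lift F A :=
    FreeAlgebra.hom_ext (by funext x; simp [extendScalars])
  exact DFunLike.congr_fun h_comp p

lemma lift_map_algebraMap {X n : Type*} [Fintype n] [DecidableEq n] (A : X → Matrix n n F)
    (p : FreeAlgebra F X) :
    FreeAlgebra.lift F (fun x => (A x).map (algebraMap F K)) p =
      (FreeAlgebra.lift F A p).map (algebraMap F K) := by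
  have h_comp : FreeAlgebra.lift F (fun x => (A x).map (algebraMap F K)) =
      (Algebra.ofId F K).mapMatrix.comp (FreeAlgebra.lift F A) :=
    FreeAlgebra.hom_ext (by funext x; simp [Algebra.ofId])
  exact DFunLike.congr_fun h_comp p

lemma trace_lift_map_algebraMap {X n : Type*} [Fintype n] [DecidableEq n] (A : X → Matrix n n F)
    (p : FreeAlgebra F X) :
    (FreeAlgebra.lift F (fun x => (A x).map (algebraMap F K)) p).trace =
      algebraMap F K (FreeAlgebra.lift F A p).trace := by
  rw [lift_map_algebraMap, AddMonoidHom.map_trace]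

lemma cycEq_extendScalars {F : Type*} (K : Type*) [Field F] [Field K] [Algebra F K] {g : ℕ}
    {f h : FreeAlgebra F (Fin g)} (hfh : CycEq F f h) :
    CycEq K (extendScalars F K (Fin g) f) (extendScalars F K (Fin g) h) := by
  have h_le : commutatorSpan F (FreeAlgebra F (Fin g)) ≤
      ((commutatorSpan K (FreeAlgebra K (Fin g))).restrictScalars F).comap
        (extendScalars F K (Fin g)).toLinearMap := by
    refine Submodule.span_le.2 ?_
    rintro _ ⟨p, q, rfl⟩
    exact Submodule.subset_span ⟨extendScalars F K (Fin g) p, extendScalars F K (Fin g) q, by simp⟩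
  rw [CycEq, ← map_sub]
  exact h_le hfh

end ScalarExtension

end Spurnullstellensatz

open Spurnullstellensatz in
theorem real_complex_spurnullstellensatz_general {F K ι : Type*} [Field F] [CharZero F] [Field K]
    [Algebra F K] [Fintype ι] {g : ℕ} (f : ι → FreeAlgebra F (Fin g)) (f₀ : FreeAlgebra F (Fin g)) :
    List.TFAE [
      ∀ (n : ℕ) (A : Fin g → Matrix (Fin n) (Fin n) K),
        (∀ i, (FreeAlgebra.lift F A (f i)).trace = 0) → (FreeAlgebra.lift F A f₀).trace = 0,
      ∃ c : ι → K,
        CycEq K (∑ i, c i • extendScalars F K (Fin g) (f i)) 1 ∨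
        CycEq K (∑ i, c i • extendScalars F K (Fin g) (f i)) (extendScalars F K (Fin g) f₀),
      ∃ c : ι → F, CycEq F (∑ i, c i • f i) 1 ∨ CycEq F (∑ i, c i • f i) f₀,
      ∀ (n : ℕ) (A : Fin g → Matrix (Fin n) (Fin n) F),
        (∀ i, (FreeAlgebra.lift F A (f i)).trace = 0) →
          (FreeAlgebra.lift F A f₀).trace = 0] := by
  have : CharZero K := charZero_of_injective_algebraMap (algebraMap F K).injective
  tfae_have 1 ↔ 2 := by
    simp only [exists_cycEq_iff_forall_trace, lift_extendScalars]
  tfae_have 3 ↔ 4 := exists_cycEq_iff_forall_trace f f₀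
  tfae_have 1 → 4 := fun h n A hA => by
    simpa [trace_lift_map_algebraMap, hA] using h n fun x => (A x).map (algebraMap F K)
  tfae_have 3 → 2 := by
    rintro ⟨c, hc⟩
    have h_sum : ∑ i, algebraMap F K (c i) • extendScalars F K (Fin g) (f i) =
        extendScalars F K (Fin g) (∑ i, c i • f i) := by
      simp only [map_sum, map_smul, algebraMap_smul]
    refine ⟨fun i => algebraMap F K (c i), ?_⟩
    rw [h_sum]
    exact hc.imp (fun h => by simpa using cycEq_extendScalars K h) (cycEq_extendScalars K)
  tfae_finish

/-- Passing between `ℝ` and its algebraic closure `ℂ`: four equivalent formulations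
of the tracial Nullstellensatz for real free polynomials. -/
theorem real_complex_spurnullstellensatz (g r : ℕ)
    (f : Fin r → FreeAlgebra ℝ (Fin g)) (f₀ : FreeAlgebra ℝ (Fin g)) :
    ((∀ (n : ℕ) (A : Fin g → Matrix (Fin n) (Fin n) ℂ),
        (∀ i : Fin r, Matrix.trace (FreeAlgebra.lift ℝ A (f i)) = 0) →
        Matrix.trace (FreeAlgebra.lift ℝ A f₀) = 0)
      ↔ (∃ lam : Fin r → ℂ,
          CycEq ℂ (∑ i : Fin r, lam i • toComplex g (f i)) 1 ∨
          CycEq ℂ (∑ i : Fin r, lam i • toComplex g (f i)) (toComplex g f₀)))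
    ∧ ((∃ lam : Fin r → ℂ,
          CycEq ℂ (∑ i : Fin r, lam i • toComplex g (f i)) 1 ∨
          CycEq ℂ (∑ i : Fin r, lam i • toComplex g (f i)) (toComplex g f₀))
      ↔ (∃ lam : Fin r → ℝ,
          CycEq ℝ (∑ i : Fin r, lam i • f i) 1 ∨
          CycEq ℝ (∑ i : Fin r, lam i • f i) f₀))
    ∧ ((∃ lam : Fin r → ℝ,
          CycEq ℝ (∑ i : Fin r, lam i • f i) 1 ∨
          CycEq ℝ (∑ i : Fin r, lam i • f i) f₀)
      ↔ (∀ (n : ℕ) (A : Fin g → Matrix (Fin n) (Fin n) ℝ),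
          (∀ i : Fin r, Matrix.trace (FreeAlgebra.lift ℝ A (f i)) = 0) →
          Matrix.trace (FreeAlgebra.lift ℝ A f₀) = 0)) := by
  have h := real_complex_spurnullstellensatz_general (K := ℂ) f f₀
  exact ⟨h.out 0 1, h.out 1 2, h.out 2 3⟩
end

section
/- Let d ∈ ℕ and let L : ℂ⟨X⟩_d → ℂ be a tracial linear functional. Then there exist finitely many scalars λ₁, …, λ_k ∈ ℂ, sizes n₁, …, n_k ∈ ℕ, and tuples A_ℓ ∈ M_{n_ℓ}(ℂ)^g such that L(p) = Σ_{ℓ=1}^k λ_ℓ · tr(p(A_ℓ)) for every p ∈ ℂ⟨X⟩_d; that is, L lies in the linear span of the functionals φ_A. -/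
/-- The subspace `F⟨X⟩_d` of the free algebra spanned by words of length at most `d`. -/
def wordSpan (F : Type*) [Field F] (g d : ℕ) : Submodule F (FreeAlgebra F (Fin g)) :=
  Submodule.span F
    {x : FreeAlgebra F (Fin g) |
      ∃ w : List (Fin g), w.length ≤ d ∧ x = (w.map (FreeAlgebra.ι F)).prod}

lemma word_mem_wordSpan (F : Type*) [Field F] {g d : ℕ} (w : List (Fin g))
    (hw : w.length ≤ d) : (w.map (FreeAlgebra.ι F)).prod ∈ wordSpan F g d :=
  Submodule.subset_span ⟨w, hw, rfl⟩

/-- A linear functional on `F⟨X⟩_d` is tracial if `L (u * v) = L (v * u)` for all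
words `u, v` with `|u| + |v| ≤ d`. -/
def IsTracial {F : Type*} [Field F] {g d : ℕ} (L : wordSpan F g d →ₗ[F] F) : Prop :=
  ∀ (u v : List (Fin g)) (h : u.length + v.length ≤ d),
    L ⟨((u ++ v).map (FreeAlgebra.ι F)).prod,
        word_mem_wordSpan F (u ++ v) (by rw [List.length_append]; exact h)⟩ =
    L ⟨((v ++ u).map (FreeAlgebra.ι F)).prod,
        word_mem_wordSpan F (v ++ u) (by rw [List.length_append]; omega)⟩

/-!
For a word `w`, consider the directed graph on the distinct rotations of `w` with an edge from each
rotation `a` to `a.rotate 1`, coloured by the first letter of `a`, and let `A` be the tuple of its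
adjacency matrices, one for each colour. A closed walk of length `|w|` from `a` spells out `a`
itself, so for words `v` of length `|w|` the trace `tr (v A)` is `1` if `v` is a rotation of `w` and
`0` otherwise. Taking distinct rotations as vertices, rather than the `|w|` positions in `w`, keeps
this count equal to `1` for periodic words too, whatever the characteristic.

Since `tr (v (t A)) = t ^ |v| tr (v A)`, Lagrange interpolation in `t` over an infinite field
isolates the words of length `|w|`. Hence, on words of length at most `d`, the indicator of each
rotation class is a combination of the `φ_A`, and a tracial functional is a combination of these
indicators.
-/

open FreeAlgebra

section TraceFunctional

variable {R X n : Type*} [CommSemiring R] [Fintype n] [DecidableEq n]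

/-- The functional `φ_A : p ↦ tr (p A)` on the free algebra. -/
noncomputable def traceFunctional (A : X → Matrix n n R) : FreeAlgebra R X →ₗ[R] R :=
  Matrix.traceLinearMap n R R ∘ₗ (lift R A).toLinearMap

lemma traceFunctional_apply (A : X → Matrix n n R) (p : FreeAlgebra R X) :
    traceFunctional A p = (lift R A p).trace :=
  rfl

lemma traceFunctional_word (A : X → Matrix n n R) (v : List X) :
    traceFunctional A (v.map (ι R)).prod = (v.map A).prod.trace := by
  simp [traceFunctional_apply, map_list_prod, Function.comp_def]

lemma traceFunctional_smul_word (t : R) (A : X → Matrix n n R) (v : List X) :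
    traceFunctional (t • A) (v.map (ι R)).prod =
      t ^ v.length * traceFunctional A (v.map (ι R)).prod := by
  have prod_smul : (v.map (t • A)).prod = t ^ v.length • (v.map A).prod := by
    induction v with
    | nil => simp
    | cons i v ih => simp [ih, smul_smul, pow_succ]
  rw [traceFunctional_word, traceFunctional_word, prod_smul, Matrix.trace_smul, smul_eq_mul]

lemma traceFunctional_reindex {m : Type*} [Fintype m] [DecidableEq m] (e : n ≃ m)
    (A : X → Matrix n n R) :
    traceFunctional (fun i => Matrix.reindexAlgEquiv R R e (A i)) = traceFunctional A := by
  have lift_reindex : lift R (fun i => Matrix.reindexAlgEquiv R R e (A i)) =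
      (Matrix.reindexAlgEquiv R R e).toAlgHom.comp (lift R A) := by
    ext i : 2
    simp
  ext p
  rw [traceFunctional_apply, traceFunctional_apply, lift_reindex]
  exact e.symm.sum_comp fun a => lift R A p a a

end TraceFunctional

section TraceSpan

variable (R X : Type*) [CommSemiring R]

/-- The linear span of the functionals `φ_A`, over matrix tuples `A` of all sizes. -/
noncomputable def traceSpan : Submodule R (FreeAlgebra R X →ₗ[R] R) :=
  Submodule.span R {f | ∃ (n : ℕ) (A : X → Matrix (Fin n) (Fin n) R), traceFunctional A = f}

variable {R X}

lemma traceFunctional_mem_traceSpan {n : Type*} [Fintype n] [DecidableEq n]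
    (A : X → Matrix n n R) : traceFunctional A ∈ traceSpan R X :=
  Submodule.subset_span ⟨_, _, traceFunctional_reindex (Fintype.equivFin n) A⟩

lemma exists_eq_sum_of_mem_traceSpan {f : FreeAlgebra R X →ₗ[R] R} (hf : f ∈ traceSpan R X) :
    ∃ (k : ℕ) (lam : Fin k → R) (sz : Fin k → ℕ)
      (A : (ℓ : Fin k) → X → Matrix (Fin (sz ℓ)) (Fin (sz ℓ)) R),
      f = ∑ ℓ, lam ℓ • traceFunctional (A ℓ) := by
  obtain ⟨k, lam, φ, rfl⟩ := Submodule.mem_span_set'.1 hf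
  choose sz A hA using fun ℓ => (φ ℓ).2
  exact ⟨k, lam, sz, A, by simp only [hA]⟩

end TraceSpan

section HomogeneousPart

variable {F : Type*} [Field F] [Infinite F]

open Polynomial in
lemma exists_sum_mul_pow_eq_ite (d k : ℕ) :
    ∃ c t : Fin (d + 1) → F, ∀ m ≤ d, ∑ j, c j * t j ^ m = if m = k then 1 else 0 := by
  let t : Fin (d + 1) → F := fun j => Infinite.natEmbedding F j
  have ht : Function.Injective t := (Infinite.natEmbedding F).injective.comp Fin.val_injective
  refine ⟨fun j => (Lagrange.basis Finset.univ t j).coeff k, t, fun m hm => ?_⟩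
  have interpolate_pow : (X ^ m : F[X]) =
      ∑ j, C (t j ^ m) * Lagrange.basis Finset.univ t j := by
    have degree_lt : (X ^ m : F[X]).degree < (Finset.univ : Finset (Fin (d + 1))).card := by
      rw [degree_X_pow, Finset.card_univ, Fintype.card_fin]
      exact_mod_cast Nat.lt_succ_of_le hm
    simpa [Lagrange.interpolate_apply] using Lagrange.eq_interpolate ht.injOn degree_lt
  have coeff_eq := congrArg (fun p => p.coeff k) interpolate_pow
  simp only [finsetSum_coeff, coeff_X_pow, coeff_C_mul] at coeff_eq
  simpa only [mul_comm, eq_comm (a := k)] using coeff_eq.symm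

lemma exists_mem_traceSpan_homogeneousPart {X n : Type*} [Fintype n] [DecidableEq n]
    (A : X → Matrix n n F) (d k : ℕ) :
    ∃ f ∈ traceSpan F X, ∀ v : List X, v.length ≤ d →
      f (v.map (ι F)).prod =
        if v.length = k then traceFunctional A (v.map (ι F)).prod else 0 := by
  obtain ⟨c, t, hct⟩ := exists_sum_mul_pow_eq_ite (F := F) d k
  refine ⟨∑ j, c j • traceFunctional (t j • A), Submodule.sum_mem _ fun j _ =>
    Submodule.smul_mem _ _ (traceFunctional_mem_traceSpan _), fun v hv => ?_⟩
  simp only [LinearMap.sum_apply, LinearMap.smul_apply, traceFunctional_smul_word, smul_eq_mul,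
    ← mul_assoc, ← Finset.sum_mul, hct _ hv, ite_mul, one_mul, zero_mul]

end HomogeneousPart

section RotationMatrix

variable (R : Type*) {X : Type*} [DecidableEq X]

/-- The adjacency matrix of the edges of colour `i` in the rotation graph of the word `w`: its
vertices are the distinct rotations of `w`, and an edge whose colour is the first letter of `a`
leads from each nonempty `a` to `a.rotate 1`. Walks in this graph spell out the rotations of `w`. -/
def rotationMatrix [Zero R] [One R] (w : List X) (i : X) :
    Matrix {v // v ∈ w.cyclicPermutations} {v // v ∈ w.cyclicPermutations} R :=
  Matrix.of fun a b => if a.1.head? = some i ∧ b.1 = a.1.rotate 1 then 1 else 0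

lemma prod_map_rotationMatrix_apply [Semiring R] {w v : List X} (hv : v.length ≤ w.length)
    (a b : {v // v ∈ w.cyclicPermutations}) :
    (v.map (rotationMatrix R w)).prod a b =
      if v <+: a.1 ∧ b.1 = a.1.rotate v.length then 1 else 0 := by
  induction v generalizing a with
  | nil => simp [Matrix.one_apply, Subtype.ext_iff, eq_comm]
  | cons i v ih =>
    obtain ⟨a, ha⟩ := a
    have length_a := List.length_mem_cyclicPermutations w ha
    obtain _ | ⟨j, l⟩ := a
    · exact absurd (hv.trans_eq length_a.symm) (Nat.not_succ_le_zero _)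
    have rotate_mem : l ++ [j] ∈ w.cyclicPermutations :=
      List.mem_cyclicPermutations_iff.2
        ((List.isRotated_concat j l).trans (List.mem_cyclicPermutations_iff.1 ha))
    have length_le : v.length ≤ l.length := Nat.succ_le_succ_iff.1 (hv.trans_eq length_a.symm)
    have prefix_iff : v <+: l ++ [j] ↔ v <+: l :=
      ⟨fun h => List.prefix_of_prefix_length_le h (List.prefix_append l [j]) length_le,
        fun h => h.trans (List.prefix_append l [j])⟩
    rw [List.map_cons, List.prod_cons, Matrix.mul_apply, Finset.sum_eq_single ⟨_, rotate_mem⟩]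
    · rw [ih (Nat.le_of_succ_le hv)]
      simp only [prefix_iff]
      by_cases hij : i = j <;> simp [rotationMatrix, List.cons_prefix_cons, hij, eq_comm]
    · intro c _ hc
      have ne_rotate : c.1 ≠ l ++ [j] := fun h => hc (Subtype.ext h)
      simp [rotationMatrix, ne_rotate]
    · simp

lemma traceFunctional_rotationMatrix_word [CommSemiring R] {w v : List X}
    (hvw : v.length = w.length) :
    traceFunctional (rotationMatrix R w) (v.map (ι R)).prod = if v ~r w then 1 else 0 := by
  have diag_apply (a : {v // v ∈ w.cyclicPermutations}) :
      (v.map (rotationMatrix R w)).prod a a = if v = a.1 then 1 else 0 := by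
    have length_eq : a.1.length = v.length :=
      (List.length_mem_cyclicPermutations w a.2).trans hvw.symm
    have prefix_iff : v <+: a.1 ↔ v = a.1 :=
      ⟨fun h => h.eq_of_length length_eq.symm, fun h => h ▸ List.prefix_rfl⟩
    rw [prod_map_rotationMatrix_apply R hvw.le, ← length_eq, List.rotate_length]
    simp [prefix_iff]
  rw [traceFunctional_word, Matrix.trace]
  simp only [Matrix.diag_apply, diag_apply]
  split_ifs with h
  · rw [Finset.sum_eq_single ⟨v, List.mem_cyclicPermutations_iff.2 h⟩]
    · simp
    · exact fun a _ ha => if_neg fun hva => ha (Subtype.ext hva.symm)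
    · simp
  · exact Finset.sum_eq_zero fun a _ =>
      if_neg fun hva : v = a.1 => h (hva ▸ List.mem_cyclicPermutations_iff.1 a.2)

end RotationMatrix

section RotationInvariant

variable {F X : Type*} [Field F] [Infinite F]

lemma exists_mem_traceSpan_isRotated_indicator [DecidableEq X] (d : ℕ) (w : List X) :
    ∃ f ∈ traceSpan F X, ∀ v : List X, v.length ≤ d →
      f (v.map (ι F)).prod = if v ~r w then 1 else 0 := by
  obtain ⟨f, hf, hfv⟩ := exists_mem_traceSpan_homogeneousPart (rotationMatrix F w) d w.length
  refine ⟨f, hf, fun v hv => (hfv v hv).trans ?_⟩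
  split_ifs with hlen hrot hrot
  · rw [traceFunctional_rotationMatrix_word F hlen, if_pos hrot]
  · rw [traceFunctional_rotationMatrix_word F hlen, if_neg hrot]
  · exact absurd hrot.perm.length_eq hlen
  · rfl

lemma exists_mem_traceSpan_eq_on_words [Finite X] {d : ℕ} (L : FreeAlgebra F X →ₗ[F] F)
    (hL : ∀ v w : List X, v ~r w → v.length ≤ d → L (v.map (ι F)).prod = L (w.map (ι F)).prod) :
    ∃ f ∈ traceSpan F X, ∀ v : List X, v.length ≤ d →
      L (v.map (ι F)).prod = f (v.map (ι F)).prod := by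
  classical
  choose χ χ_mem χ_word using exists_mem_traceSpan_isRotated_indicator (F := F) (X := X) d
  let rep : Cycle X → List X := Quotient.out
  have coe_rep (c : Cycle X) : (rep c : Cycle X) = c := Quotient.out_eq c
  let cycles : Finset (Cycle X) := (List.finite_length_le X d).toFinset.image (↑)
  let f := ∑ c ∈ cycles, L ((rep c).map (ι F)).prod • χ (rep c)
  refine ⟨f, Submodule.sum_mem _ fun c _ => Submodule.smul_mem _ _ (χ_mem _), fun v hv => ?_⟩
  have isRotated_rep_iff (c : Cycle X) : v ~r rep c ↔ (v : Cycle X) = c := by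
    rw [← Cycle.coe_eq_coe, coe_rep]
  have mem_cycles : (v : Cycle X) ∈ cycles :=
    Finset.mem_image_of_mem _ ((Set.Finite.mem_toFinset _).2 hv)
  calc L (v.map (ι F)).prod
      = L ((rep v).map (ι F)).prod := hL _ _ ((isRotated_rep_iff _).2 rfl) hv
    _ = ∑ c ∈ cycles, if (v : Cycle X) = c then L ((rep c).map (ι F)).prod else 0 := by
      rw [Finset.sum_ite_eq, if_pos mem_cycles]
    _ = f (v.map (ι F)).prod := by
      simp only [f, LinearMap.sum_apply, LinearMap.smul_apply, χ_word _ v hv, isRotated_rep_iff,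
        smul_eq_mul, mul_ite, mul_one, mul_zero]

end RotationInvariant

lemma IsTracial.eq_of_isRotated {F : Type*} [Field F] {g d : ℕ} {L : wordSpan F g d →ₗ[F] F}
    (hL : IsTracial L) {v w : List (Fin g)} (h : v ~r w) (hv : v.length ≤ d) :
    L ⟨(v.map (ι F)).prod, word_mem_wordSpan F v hv⟩ =
      L ⟨(w.map (ι F)).prod, word_mem_wordSpan F w (h.perm.length_eq ▸ hv)⟩ := by
  obtain ⟨n, hn, rfl⟩ := List.isRotated_iff_mod.1 h
  have := hL (v.take n) (v.drop n) (by rwa [← List.length_append, List.take_append_drop])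
  simpa only [List.take_append_drop, ← List.rotate_eq_drop_append_take hn] using this

theorem tracial_functional_is_combination_of_traces_general {F : Type*} [Field F] [Infinite F]
    (g d : ℕ) (L : wordSpan F g d →ₗ[F] F) (hL : IsTracial L) :
    ∃ (k : ℕ) (lam : Fin k → F) (sz : Fin k → ℕ)
      (A : (ℓ : Fin k) → Fin g → Matrix (Fin (sz ℓ)) (Fin (sz ℓ)) F),
      ∀ p : wordSpan F g d,
        L p = ∑ ℓ : Fin k,
          lam ℓ * Matrix.trace (FreeAlgebra.lift F (A ℓ) (p : FreeAlgebra F (Fin g))) := by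
  obtain ⟨L', rfl⟩ := L.exists_extend
  obtain ⟨f, hf, hLf⟩ := exists_mem_traceSpan_eq_on_words L' fun _ _ => hL.eq_of_isRotated
  have eqOn_wordSpan : Set.EqOn L' f (wordSpan F g d) := by
    refine LinearMap.eqOn_span ?_
    rintro _ ⟨v, hv, rfl⟩
    exact hLf v hv
  obtain ⟨k, lam, sz, A, rfl⟩ := exists_eq_sum_of_mem_traceSpan hf
  refine ⟨k, lam, sz, A, fun p => (eqOn_wordSpan p.2).trans ?_⟩
  simp only [LinearMap.sum_apply, LinearMap.smul_apply, smul_eq_mul, traceFunctional_apply]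

/-- Every tracial linear functional on `ℂ⟨X⟩_d` is a linear combination of the
functionals `p ↦ tr (p A)` for tuples of complex matrices `A`. -/
theorem tracial_functional_is_combination_of_traces (g d : ℕ)
    (L : wordSpan ℂ g d →ₗ[ℂ] ℂ) (hL : IsTracial L) :
    ∃ (k : ℕ) (lam : Fin k → ℂ) (sz : Fin k → ℕ)
      (A : (ℓ : Fin k) → Fin g → Matrix (Fin (sz ℓ)) (Fin (sz ℓ)) ℂ),
      ∀ p : wordSpan ℂ g d,
        L p = ∑ ℓ : Fin k,
          lam ℓ * Matrix.trace (FreeAlgebra.lift ℂ (A ℓ) (p : FreeAlgebra ℂ (Fin g))) :=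
  tracial_functional_is_combination_of_traces_general g d L hL
end
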